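/- Let A and B be C*-algebras with ideals I ⊆ A and J ⊆ B, let X be an A–B-imprimitivity bimodule and Y an (A/I)–(B/J)-imprimitivity bimodule, and suppose there is a surjective linear map q : X → Y satisfying q(a·x) = p^A(a)·q(x), q(x·b) = q(x)·p^B(b), p^A(⟨x,y⟩_A) = ⟨q(x),q(y)⟩_{A/I}, and p^B(⟨x,y⟩_B) = ⟨q(x),q(y)⟩_{B/J} for all x, y ∈ X, a ∈ A, b ∈ B, where p^A : A → A/I and p^B : B → B/J are the quotient maps. Then I and J are paired under the Rieffel correspondence associated to X, i.e., I = X–Ind J. -/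

import Mathlib

/-!
Common framework for formalizing "Exactness and Fell bundles over groupoids" (Lalonde).

Since Fell bundles over groupoids, their full/reduced C*-algebras, groupoid crossed
products, etc. are far beyond current Mathlib, we axiomatize the relevant objects as
structures.  Deep analytic constructions (e.g. the reduced C*-algebra of a Fell bundle)
are recorded as *data* fields of these structures, pinned down by the characterizing
properties that are expressible at this level; predicates such as nuclearity, exactness,
complete positivity, amenability, etc. are given genuine definitions.
-/

open Topology Matrix
open scoped ZeroAtInfty

noncomputable section

namespace FellPaper

/-- A bundled (possibly non-unital) complex C*-algebra. -/
structure CStarAlg : Type 1 where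
  carrier : Type
  [alg : NonUnitalCStarAlgebra carrier]

attribute [instance] CStarAlg.alg

/-- A bundled complex Hilbert space. -/
structure HilbertCpx : Type 1 where
  carrier : Type
  [nacg : NormedAddCommGroup carrier]
  [ips : InnerProductSpace ℂ carrier]
  [complete : CompleteSpace carrier]

attribute [instance] HilbertCpx.nacg HilbertCpx.ips HilbertCpx.complete

/-- A closed two-sided (hence automatically self-adjoint) ideal of a C*-algebra,
as a predicate on subsets. -/
structure IsCStarIdeal (A : CStarAlg) (I : Set A.carrier) : Prop where
  zero_mem : (0 : A.carrier) ∈ I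
  add_mem : ∀ {a b : A.carrier}, a ∈ I → b ∈ I → a + b ∈ I
  smul_mem : ∀ (c : ℂ) {a : A.carrier}, a ∈ I → c • a ∈ I
  mul_left_mem : ∀ (a : A.carrier) {b : A.carrier}, b ∈ I → a * b ∈ I
  mul_right_mem : ∀ {a : A.carrier}, a ∈ I → ∀ b : A.carrier, a * b ∈ I
  star_mem : ∀ {a : A.carrier}, a ∈ I → star a ∈ I
  isClosed : IsClosed I

/-- A pair of morphisms of C*-algebras forms a short exact sequence
`0 → A → B → C → 0`. -/
def IsSES {A B C : CStarAlg} (ι : A.carrier →⋆ₙₐ[ℂ] B.carrier)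
    (π : B.carrier →⋆ₙₐ[ℂ] C.carrier) : Prop :=
  Function.Injective ι ∧ Function.Surjective π ∧
    Set.range ι = {b : B.carrier | π b = 0}

/-- A linear map between (not necessarily unital) complex *-algebras is completely
positive if all of its matrix amplifications send positive elements to positive
elements. -/
def IsCP {A B : Type} [NonUnitalRing A] [StarRing A] [Module ℂ A]
    [NonUnitalRing B] [StarRing B] [Module ℂ B] (φ : A →ₗ[ℂ] B) : Prop :=
  ∀ (n : ℕ) (M : Matrix (Fin n) (Fin n) A),
    (∃ N : Matrix (Fin n) (Fin n) A, M = Nᴴ * N) →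
      ∃ N' : Matrix (Fin n) (Fin n) B, M.map φ = N'ᴴ * N'

/-- The `n × n` complex matrix algebra, realized as operators on `ℂⁿ`. -/
abbrev MatAlg (n : ℕ) : Type :=
  EuclideanSpace ℂ (Fin n) →L[ℂ] EuclideanSpace ℂ (Fin n)

/-- Nuclearity of a C*-algebra: the identity map approximately factors through
matrix algebras by completely positive contractions (CPAP). -/
def NuclearCStar (A : CStarAlg) : Prop :=
  ∀ (F : Finset A.carrier) (ε : ℝ), 0 < ε →
    ∃ (n : ℕ) (ψ : A.carrier →ₗ[ℂ] MatAlg n) (φ : MatAlg n →ₗ[ℂ] A.carrier),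
      IsCP ψ ∧ IsCP φ ∧ (∀ a, ‖ψ a‖ ≤ ‖a‖) ∧ (∀ m, ‖φ m‖ ≤ ‖m‖) ∧
      ∀ a ∈ F, ‖φ (ψ a) - a‖ < ε

/-- Exactness of a C*-algebra, via Kirchberg's characterization: `A` is exact iff it is
nuclearly embeddable, i.e. it admits a faithful representation that approximately
factors through matrix algebras by completely positive contractions. -/
def ExactCStar (A : CStarAlg) : Prop :=
  ∃ (H : HilbertCpx) (π : A.carrier →⋆ₙₐ[ℂ] (H.carrier →L[ℂ] H.carrier)),
    Function.Injective π ∧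
    ∀ (F : Finset A.carrier) (ε : ℝ), 0 < ε →
      ∃ (n : ℕ) (ψ : A.carrier →ₗ[ℂ] MatAlg n)
        (φ : MatAlg n →ₗ[ℂ] (H.carrier →L[ℂ] H.carrier)),
        IsCP ψ ∧ IsCP φ ∧ (∀ a, ‖ψ a‖ ≤ ‖a‖) ∧ (∀ m, ‖φ m‖ ≤ ‖m‖) ∧
        ∀ a ∈ F, ‖φ (ψ a) - π a‖ < ε

/-- An `A`–`B`-imprimitivity bimodule: a full left Hilbert `A`-module and full right
Hilbert `B`-module structure on a Banach space `X` with compatible commuting actions. -/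
structure ImprimBimod (A B : CStarAlg) : Type 1 where
  X : Type
  [nacg : NormedAddCommGroup X]
  [nsp : NormedSpace ℂ X]
  [complete : CompleteSpace X]
  lsmul : A.carrier → X → X
  rsmul : X → B.carrier → X
  linner : X → X → A.carrier   -- `_A⟨x, y⟩`
  rinner : X → X → B.carrier   -- `⟨x, y⟩_B`
  lsmul_add : ∀ a x y, lsmul a (x + y) = lsmul a x + lsmul a y
  add_lsmul : ∀ a b x, lsmul (a + b) x = lsmul a x + lsmul b x
  mul_lsmul : ∀ a b x, lsmul (a * b) x = lsmul a (lsmul b x)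
  lsmul_smul : ∀ (c : ℂ) a x, lsmul (c • a) x = c • lsmul a x
  rsmul_add : ∀ x y b, rsmul (x + y) b = rsmul x b + rsmul y b
  add_rsmul : ∀ x a b, rsmul x (a + b) = rsmul x a + rsmul x b
  rsmul_mul : ∀ x a b, rsmul x (a * b) = rsmul (rsmul x a) b
  rsmul_smul : ∀ (c : ℂ) x b, rsmul x (c • b) = c • rsmul x b
  act_comm : ∀ a x b, rsmul (lsmul a x) b = lsmul a (rsmul x b)
  rinner_add_left : ∀ x y z, rinner (x + y) z = rinner x z + rinner y z
  rinner_add_right : ∀ x y z, rinner x (y + z) = rinner x y + rinner x z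
  rinner_smul_right : ∀ (c : ℂ) x y, rinner x (c • y) = c • rinner x y
  rinner_star : ∀ x y, star (rinner x y) = rinner y x
  rinner_rsmul : ∀ x y b, rinner x (rsmul y b) = rinner x y * b
  rinner_pos : ∀ x, ∃ b, rinner x x = star b * b
  linner_add_left : ∀ x y z, linner (x + y) z = linner x z + linner y z
  linner_smul_left : ∀ (c : ℂ) x y, linner (c • x) y = c • linner x y
  linner_star : ∀ x y, star (linner x y) = linner y x
  linner_lsmul : ∀ a x y, linner (lsmul a x) y = a * linner x y
  linner_pos : ∀ x, ∃ a, linner x x = star a * a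
  imprimitivity : ∀ x y z, lsmul (linner x y) z = rsmul x (rinner y z)
  norm_rinner : ∀ x, ‖x‖ ^ 2 = ‖rinner x x‖
  left_full : Dense (↑(Submodule.span ℂ {a : A.carrier | ∃ x y, a = linner x y}) : Set A.carrier)
  right_full : Dense (↑(Submodule.span ℂ {b : B.carrier | ∃ x y, b = rinner x y}) : Set B.carrier)

attribute [instance] ImprimBimod.nacg ImprimBimod.nsp ImprimBimod.complete

/-- Morita equivalence of C*-algebras. -/
def MoritaEq (A B : CStarAlg) : Prop := Nonempty (ImprimBimod A B)

/-- The Rieffel correspondence associated to an `A`–`C`-imprimitivity bimodule `M`: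
the ideal `X–Ind J` of `A` induced from an ideal `J` of `C`. -/
def RieffelIdeal {A C : CStarAlg} (M : ImprimBimod A C) (J : Set C.carrier) :
    Set A.carrier :=
  closure (↑(Submodule.span ℂ
    {a : A.carrier | ∃ x y, ∃ c ∈ J, a = M.linner (M.rsmul x c) y}) : Set A.carrier)

/-- A double centralizer (multiplier) of a C*-algebra, encoded by its pair of
left/right multiplication operators. -/
structure Multiplier (A : CStarAlg) : Type where
  lp : A.carrier →L[ℂ] A.carrier
  rp : A.carrier →L[ℂ] A.carrier
  lp_mul : ∀ a b, lp (a * b) = lp a * b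
  rp_mul : ∀ a b, rp (a * b) = a * rp b
  central_assoc : ∀ a b, a * lp b = rp a * b

/-- A self-adjoint idempotent multiplier. -/
def Multiplier.IsProjection {A : CStarAlg} (p : Multiplier A) : Prop :=
  (∀ a, p.lp (p.lp a) = p.lp a) ∧ (∀ a, p.rp (p.rp a) = p.rp a) ∧
  (∀ a, star (p.lp a) = p.rp (star a))

/-- A central `C₀(X)`-algebra structure on a C*-algebra `A` (this is the usual notion
of a `C₀(X)`-algebra: a nondegenerate central action of `C₀(X)` by multipliers). -/
structure C0Structure (X : Type) [TopologicalSpace X] (A : CStarAlg) : Type 1 where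
  smul : C₀(X, ℂ) → A.carrier → A.carrier
  smul_add : ∀ f a b, smul f (a + b) = smul f a + smul f b
  add_smul : ∀ f g a, smul (f + g) a = smul f a + smul g a
  smul_mul : ∀ f a b, smul f (a * b) = smul f a * b
  mul_smul' : ∀ f a b, smul f (a * b) = a * smul f b
  smul_smul' : ∀ f g a, smul (f * g) a = smul f (smul g a)
  smul_star : ∀ f a, star (smul f a) = smul (star f) (star a)
  norm_smul_le : ∀ f a, ‖smul f a‖ ≤ ‖f‖ * ‖a‖
  nondegenerate :
    Dense (↑(Submodule.span ℂ {a : A.carrier | ∃ f b, a = smul f b}) : Set A.carrier)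

/-! ## Topological groupoids -/

/-- A second countable, locally compact Hausdorff topological groupoid.  The partially
defined multiplication is encoded by a total function `mul` together with the
composability predicate `src x = rng y`; all axioms are imposed only on composable
pairs (the value of `mul` elsewhere is junk). -/
structure LCGroupoid : Type 1 where
  carrier : Type
  [top : TopologicalSpace carrier]
  [t2 : T2Space carrier]
  [lc : LocallyCompactSpace carrier]
  [sc : SecondCountableTopology carrier]
  src : carrier → carrier
  rng : carrier → carrier
  mul : carrier → carrier → carrier
  inv : carrier → carrier
  src_comp : ∀ x y, src x = rng y → src (mul x y) = src y
  rng_comp : ∀ x y, src x = rng y → rng (mul x y) = rng x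
  mul_assoc' : ∀ x y z, src x = rng y → src y = rng z →
    mul (mul x y) z = mul x (mul y z)
  rng_src : ∀ x, rng (src x) = src x
  src_rng : ∀ x, src (rng x) = rng x
  mul_src : ∀ x, mul x (src x) = x
  rng_mul : ∀ x, mul (rng x) x = x
  inv_invol : ∀ x, inv (inv x) = x
  src_inv : ∀ x, src (inv x) = rng x
  rng_inv : ∀ x, rng (inv x) = src x
  mul_inv : ∀ x, mul x (inv x) = rng x
  inv_mul : ∀ x, mul (inv x) x = src x
  continuous_src : Continuous src
  continuous_rng : Continuous rng
  continuous_inv : Continuous inv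
  continuous_mul :
    ContinuousOn (fun p : carrier × carrier => mul p.1 p.2) {p | src p.1 = rng p.2}

attribute [instance] LCGroupoid.top LCGroupoid.t2 LCGroupoid.lc LCGroupoid.sc

/-- The unit space `G⁽⁰⁾`. -/
def LCGroupoid.unitSpace (G : LCGroupoid) : Set G.carrier := {u | G.rng u = u}

/-- Composability of a pair of arrows. -/
def LCGroupoid.composable (G : LCGroupoid) (x y : G.carrier) : Prop := G.src x = G.rng y

/-- A subset of the unit space is invariant when it is saturated for the orbit
equivalence relation. -/
def LCGroupoid.InvariantSet (G : LCGroupoid) (U : Set G.carrier) : Prop :=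
  ∀ x : G.carrier, G.src x ∈ U ↔ G.rng x ∈ U

/-- Cast along an equality of base points of a fiber family. -/
def hcast {α : Type} {F : α → Type} {x y : α} (h : x = y) : F x → F y :=
  fun b => h ▸ b

instance grpdMeasurableSpace (G : LCGroupoid) : MeasurableSpace G.carrier :=
  borel G.carrier

/-- A (continuous left) Haar system on a groupoid: measures `λ^u` supported on the
range fibers, left invariant, and continuous against compactly supported functions. -/
structure HaarSystem (G : LCGroupoid) : Type 1 where
  meas : G.carrier → MeasureTheory.Measure G.carrier
  supported : ∀ u ∈ G.unitSpace, meas u ((G.rng ⁻¹' {u})ᶜ) = 0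
  nonzero : ∀ u ∈ G.unitSpace, meas u ≠ 0
  invariant : ∀ x : G.carrier,
    (meas (G.src x)).map (fun y => G.mul x y) = meas (G.rng x)
  continuous_integral : ∀ f : G.carrier → ℝ, Continuous f → HasCompactSupport f →
    Continuous fun u => ∫ y, f y ∂(meas u)

/-- (Measurewise) amenability of `(G, λ)`, expressed by the existence of an approximate
invariant mean: a sequence of nonnegative continuous compactly supported functions
whose fiberwise integrals are ≤ 1, tend to 1, and which is asymptotically invariant,
uniformly on compact sets. -/
def MeasurewiseAmenable (G : LCGroupoid) (μ : HaarSystem G) : Prop :=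
  ∃ g : ℕ → G.carrier → ℝ,
    (∀ n, Continuous (g n)) ∧ (∀ n, HasCompactSupport (g n)) ∧
    (∀ n x, 0 ≤ g n x) ∧
    (∀ n u, ∫ y, g n y ∂(μ.meas (G.rng u)) ≤ 1) ∧
    ∀ K : Set G.carrier, IsCompact K → ∀ ε : ℝ, 0 < ε → ∃ N : ℕ, ∀ n ≥ N, ∀ x ∈ K,
      |(∫ y, g n y ∂(μ.meas (G.rng x))) - 1| < ε ∧
      (∫ y, |g n (G.mul (G.inv x) y) - g n y| ∂(μ.meas (G.rng x))) < ε

/-! ## Groupoid dynamical systems and exact groupoids -/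

/-- A groupoid dynamical system `(𝒜, G, α)`: an upper semicontinuous C*-bundle over
`G⁽⁰⁾` (recorded through its fiber algebras and its section C*-algebra
`A = Γ₀(G⁽⁰⁾, 𝒜)`) together with a fiberwise action of `G`.  The reduced crossed
product `𝒜 ⋊_{α,r} G` is recorded as data. -/
structure DynSys (G : LCGroupoid) (μ : HaarSystem G) : Type 1 where
  Fib : G.carrier → CStarAlg
  act : ∀ x : G.carrier, (Fib (G.src x)).carrier ≃⋆ₐ[ℂ] (Fib (G.rng x)).carrier
  sect : CStarAlg
  eval : ∀ u : G.carrier, sect.carrier →⋆ₙₐ[ℂ] (Fib u).carrier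
  eval_surjective : ∀ u ∈ G.unitSpace, Function.Surjective (eval u)
  red : CStarAlg

/-- The fiber `I(u)` of an ideal `I ⊆ A = Γ₀(G⁽⁰⁾, 𝒜)`. -/
def dynFiberIdeal {G : LCGroupoid} {μ : HaarSystem G} (D : DynSys G μ)
    (I : Set D.sect.carrier) (u : G.carrier) : Set (D.Fib u).carrier :=
  closure (D.eval u '' I)

/-- An invariant ideal of a groupoid dynamical system:
`α_x(I(s(x))) = I(r(x))` for all `x ∈ G`. -/
def DynSys.IsInvariantIdeal {G : LCGroupoid} {μ : HaarSystem G} (D : DynSys G μ)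
    (I : Set D.sect.carrier) : Prop :=
  IsCStarIdeal D.sect I ∧
    ∀ x : G.carrier, D.act x '' dynFiberIdeal D I (G.src x) = dynFiberIdeal D I (G.rng x)

/-- The canonical sequence `0 → 𝓘 ⋊_r G → 𝒜 ⋊_r G → 𝒜/𝓘 ⋊_r G → 0` of reduced crossed
products associated to an invariant ideal (the outer algebras and maps are the canonical
ones, recorded as data). -/
structure RedCPSeq {G : LCGroupoid} {μ : HaarSystem G} (D : DynSys G μ)
    (I : Set D.sect.carrier) : Type 1 where
  redI : CStarAlg      -- `𝓘 ⋊_{α,r} G`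
  redQ : CStarAlg      -- `𝒜/𝓘 ⋊_{α,r} G`
  ι : redI.carrier →⋆ₙₐ[ℂ] D.red.carrier
  π : D.red.carrier →⋆ₙₐ[ℂ] redQ.carrier

/-- Exactness for a groupoid `G` (with Haar system): for every separable groupoid
dynamical system `(𝒜, G, α)` and every invariant ideal `I` of `Γ₀(G⁽⁰⁾, 𝒜)`, the
associated sequence of reduced crossed products is exact. -/
def ExactGroupoid (G : LCGroupoid) (μ : HaarSystem G) : Prop :=
  ∀ D : DynSys G μ, TopologicalSpace.SeparableSpace D.sect.carrier →
    ∀ I : Set D.sect.carrier, D.IsInvariantIdeal I →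
      ∀ S : RedCPSeq D I, IsSES S.ι S.π

/-- The canonical sequence `0 → C_r*(G|_U) → C_r*(G) → C_r*(G|_F) → 0` of reduced
groupoid C*-algebras associated to an open invariant subset `U` of the unit space
(recorded as data). -/
structure RedRestrictionSeq (G : LCGroupoid) (μ : HaarSystem G)
    (U : Set G.carrier) : Type 1 where
  redU : CStarAlg       -- `C_r*(G|_U)`
  redG : CStarAlg       -- `C_r*(G)`
  redF : CStarAlg       -- `C_r*(G|_F)`, `F = G⁽⁰⁾ \ U`
  ι : redU.carrier →⋆ₙₐ[ℂ] redG.carrier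
  π : redG.carrier →⋆ₙₐ[ℂ] redF.carrier

/-- Inner exactness of a groupoid. -/
def InnerExact (G : LCGroupoid) (μ : HaarSystem G) : Prop :=
  ∀ U : Set G.carrier, U ⊆ G.unitSpace → IsOpen U → G.InvariantSet U →
    ∀ S : RedRestrictionSeq G μ U, IsSES S.ι S.π

/-! ## Fell bundles -/

/-- Compactly supported continuous sections of a fiber family with total-space
topology `τ`. -/
def IsCcSection {ι : Type} [TopologicalSpace ι] {F : ι → Type}
    [∀ i, NormedAddCommGroup (F i)] (τ : TopologicalSpace (Σ i, F i))
    (f : ∀ i, F i) : Prop :=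
  @Continuous ι (Σ i, F i) _ τ (fun i => ⟨i, f i⟩) ∧
    IsCompact (closure {i | f i ≠ 0})

/-- A Fell bundle `p : ℬ → G` over a groupoid with Haar system.  The upper
semicontinuous Banach bundle is recorded through its fibers and total-space topology;
the multiplication and involution are recorded fiberwise.  The associated unit
C*-algebra `A = Γ₀(G⁽⁰⁾, ℬ)`, full C*-algebra `C*(G, ℬ)`, and reduced C*-algebra
`C_r*(G, ℬ)` are recorded as data, together with the canonical maps relating them. -/
structure FellBundle (G : LCGroupoid) (μ : HaarSystem G) : Type 1 where
  Fiber : G.carrier → Type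
  [fibNorm : ∀ x, NormedAddCommGroup (Fiber x)]
  [fibMod : ∀ x, NormedSpace ℂ (Fiber x)]
  [fibComplete : ∀ x, CompleteSpace (Fiber x)]
  totalTop : TopologicalSpace (Σ x, Fiber x)
  bmul : ∀ x y : G.carrier, Fiber x → Fiber y → Fiber (G.mul x y)
  binv : ∀ x : G.carrier, Fiber x → Fiber (G.inv x)
  norm_bmul : ∀ (x y : G.carrier) (b : Fiber x) (c : Fiber y),
    ‖bmul x y b c‖ ≤ ‖b‖ * ‖c‖
  norm_binv : ∀ (x : G.carrier) (b : Fiber x), ‖binv x b‖ = ‖b‖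
  unitAlg : CStarAlg                      -- `A = Γ₀(G⁽⁰⁾, ℬ)`
  eval : ∀ u : G.carrier, unitAlg.carrier →ₗ[ℂ] Fiber u
  full : CStarAlg                         -- `C*(G, ℬ)`
  reduced : CStarAlg                      -- `C_r*(G, ℬ)`
  redQuot : full.carrier →⋆ₙₐ[ℂ] reduced.carrier
  redQuot_surjective : Function.Surjective redQuot
  secMapRed : (∀ x, Fiber x) → reduced.carrier
  secMapRed_dense :
    Dense (secMapRed '' {f | IsCcSection totalTop f})

attribute [instance] FellBundle.fibNorm FellBundle.fibMod FellBundle.fibComplete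

/-- Separability of a Fell bundle: every fiber is a separable Banach space. -/
def FellBundle.Separable {G : LCGroupoid} {μ : HaarSystem G}
    (B : FellBundle G μ) : Prop :=
  ∀ x : G.carrier, TopologicalSpace.SeparableSpace (B.Fiber x)

/-- Saturation of a Fell bundle: `B(x)·B(y)` spans a dense subspace of `B(xy)`. -/
def FellBundle.Saturated {G : LCGroupoid} {μ : HaarSystem G}
    (B : FellBundle G μ) : Prop :=
  ∀ x y : G.carrier, G.composable x y →
    Dense (↑(Submodule.span ℂ
      {d : B.Fiber (G.mul x y) | ∃ b c, d = B.bmul x y b c}) : Set (B.Fiber (G.mul x y)))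

/-- The fiber `I(u) ⊆ B(u)` of an ideal `I` of the unit C*-algebra. -/
def fbFiberIdeal {G : LCGroupoid} {μ : HaarSystem G} (B : FellBundle G μ)
    (I : Set B.unitAlg.carrier) (u : G.carrier) : Set (B.Fiber u) :=
  closure (B.eval u '' I)

/-- The Rieffel correspondence `h_x` induced by the `B(r(x))`–`B(s(x))`-imprimitivity
bimodule `B(x)`, applied to an ideal of the fiber `B(s(x))`: the closed span of the
elements `_{B(r(x))}⟨b·j, c⟩ = (b j) c*` with `j ∈ J`. -/
def fbRieffelMap {G : LCGroupoid} {μ : HaarSystem G} (B : FellBundle G μ)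
    (x : G.carrier) (J : Set (B.Fiber (G.src x))) : Set (B.Fiber (G.rng x)) :=
  closure (↑(Submodule.span ℂ
    {d : B.Fiber (G.rng x) | ∃ (b c : B.Fiber x), ∃ j ∈ J,
      d = hcast (F := B.Fiber) (G.mul_inv x)
        (B.bmul x (G.inv x)
          (hcast (F := B.Fiber) (G.mul_src x) (B.bmul x (G.src x) b j))
          (B.binv x c))}) : Set (B.Fiber (G.rng x)))

/-- Invariance of an ideal `I` of the unit C*-algebra of a Fell bundle: the fibers of
`I` are matched up by the Rieffel correspondences of the imprimitivity bimodules
`B(x)` (equivalently, `hull(I)` is a `G`-invariant subset of `Prim A`). -/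
def FellBundle.IsInvariantIdeal {G : LCGroupoid} {μ : HaarSystem G}
    (B : FellBundle G μ) (I : Set B.unitAlg.carrier) : Prop :=
  IsCStarIdeal B.unitAlg I ∧
    ∀ x : G.carrier, fbRieffelMap B x (fbFiberIdeal B I (G.src x)) =
      fbFiberIdeal B I (G.rng x)

/-- The canonical data associated to an invariant ideal `I` of the unit C*-algebra of
a Fell bundle `ℬ`: the ideal Fell bundle `ℬ_I` (with `Γ₀(G⁽⁰⁾, ℬ_I) = I`), the
quotient Fell bundle `ℬ^I` (with `Γ₀(G⁽⁰⁾, ℬ^I) = A/I`), the fiberwise inclusions and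
quotient maps, and the induced maps of full and reduced C*-algebras. -/
structure IdealQuotientData {G : LCGroupoid} {μ : HaarSystem G}
    (B : FellBundle G μ) (I : Set B.unitAlg.carrier) : Type 1 where
  sub : FellBundle G μ        -- `ℬ_I`
  quot : FellBundle G μ       -- `ℬ^I`
  subFiberMap : ∀ x : G.carrier, sub.Fiber x →ₗ[ℂ] B.Fiber x
  subFiberMap_injective : ∀ x, Function.Injective (subFiberMap x)
  quotFiberMap : ∀ x : G.carrier, B.Fiber x →ₗ[ℂ] quot.Fiber x
  quotFiberMap_surjective : ∀ x, Function.Surjective (quotFiberMap x)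
  unitInc : sub.unitAlg.carrier →⋆ₙₐ[ℂ] B.unitAlg.carrier
  unitInc_injective : Function.Injective unitInc
  unitInc_range : Set.range unitInc = I          -- `Γ₀(G⁽⁰⁾, ℬ_I) = I`
  unitQuot : B.unitAlg.carrier →⋆ₙₐ[ℂ] quot.unitAlg.carrier
  unitQuot_surjective : Function.Surjective unitQuot
  unitQuot_ker : {a | unitQuot a = 0} = I        -- `Γ₀(G⁽⁰⁾, ℬ^I) = A/I`
  ιred : sub.reduced.carrier →⋆ₙₐ[ℂ] B.reduced.carrier
  πred : B.reduced.carrier →⋆ₙₐ[ℂ] quot.reduced.carrier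
  ιfull : sub.full.carrier →⋆ₙₐ[ℂ] B.full.carrier
  πfull : B.full.carrier →⋆ₙₐ[ℂ] quot.full.carrier

/-! ## Equivalences of Fell bundles over the trivial `G`–`G`-equivalence -/

/-- A `ℬ`–`𝒟`-equivalence over the trivial `G`–`G`-equivalence `Z = G`: an upper
semicontinuous Banach bundle `q : ℰ → G` with commuting left `ℬ`- and right
`𝒟`-actions and `ℬ`- and `𝒟`-valued sesquilinear forms making each fiber `E(z)` a
`B(r(z))`–`D(s(z))`-imprimitivity bimodule.  The associated
`Γ₀(G⁽⁰⁾, ℬ)`–`Γ₀(G⁽⁰⁾, 𝒟)`-imprimitivity bimodule `E = Γ₀(G⁽⁰⁾, ℰ|_{G⁽⁰⁾})` is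
recorded as `unitBimod`. -/
structure FellEquivData {G : LCGroupoid} {μ : HaarSystem G}
    (B D : FellBundle G μ) : Type 1 where
  EFib : G.carrier → Type
  [eNorm : ∀ x, NormedAddCommGroup (EFib x)]
  [eMod : ∀ x, NormedSpace ℂ (EFib x)]
  [eComplete : ∀ x, CompleteSpace (EFib x)]
  totalTop : TopologicalSpace (Σ x, EFib x)
  lact : ∀ x y : G.carrier, B.Fiber x → EFib y → EFib (G.mul x y)
  ract : ∀ x y : G.carrier, EFib x → D.Fiber y → EFib (G.mul x y)
  linner : ∀ x y : G.carrier, EFib x → EFib y → B.Fiber (G.mul x (G.inv y))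
  rinner : ∀ x y : G.carrier, EFib x → EFib y → D.Fiber (G.mul (G.inv x) y)
  norm_rinner : ∀ (x : G.carrier) (e : EFib x), ‖e‖ ^ 2 = ‖rinner x x e e‖
  unitBimod : ImprimBimod B.unitAlg D.unitAlg

attribute [instance] FellEquivData.eNorm FellEquivData.eMod FellEquivData.eComplete

/-- The subbundle `ℰ_{I,J}` determined fiberwise by
`E_{I,J}(x) = {e ∈ E(x) : ⟨e, e⟩_𝒟 ∈ D_J(s(x))}`. -/
def FellEquivData.subFiber {G : LCGroupoid} {μ : HaarSystem G}
    {B D : FellBundle G μ} (E : FellEquivData B D) (J : Set D.unitAlg.carrier)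
    (x : G.carrier) : Set (E.EFib x) :=
  {e | hcast (F := D.Fiber) (G.inv_mul x) (E.rinner x x e e) ∈
    fbFiberIdeal D J (G.src x)}

/-! ## Extensions of groupoids -/

/-- An extension `G⁽⁰⁾ → S → E → G → G⁽⁰⁾` of locally compact groupoids:
`i` is a homeomorphism onto a closed subgroupoid of `E` contained in the isotropy,
and `j` is a continuous open surjective homomorphism with `range i = j⁻¹(G⁽⁰⁾)`. -/
structure GrpdExtension (S E G : LCGroupoid) : Type 1 where
  i : S.carrier → E.carrier
  j : E.carrier → G.carrier
  i_closedEmbedding : Topology.IsClosedEmbedding i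
  i_src : ∀ s, E.src (i s) = i (S.src s)
  i_rng : ∀ s, E.rng (i s) = i (S.rng s)
  i_mul : ∀ s t, S.composable s t → i (S.mul s t) = E.mul (i s) (i t)
  i_isotropy : ∀ s, E.src (i s) = E.rng (i s)
  j_continuous : Continuous j
  j_open : IsOpenMap j
  j_surjective : Function.Surjective j
  j_src : ∀ e, j (E.src e) = G.src (j e)
  j_rng : ∀ e, j (E.rng e) = G.rng (j e)
  j_mul : ∀ e f, E.composable e f → j (E.mul e f) = G.mul (j e) (j f)
  range_i : Set.range i = j ⁻¹' G.unitSpace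
  j_unit_injOn : Set.InjOn j E.unitSpace

/-- The Haar system `ν` on `E` induced by Haar systems on `S` and `G`:
`∫_E f dν^u = ∫_G ∫_S f(e′ g) dμ^{s(e′)}(g) dλ^u(j(e′))`. -/
def InducedHaar {S E G : LCGroupoid} (ext : GrpdExtension S E G)
    (μS : HaarSystem S) (μG : HaarSystem G) (ν : HaarSystem E) : Prop :=
  ∀ f : E.carrier → ℝ, Continuous f → HasCompactSupport f →
    ∀ F : G.carrier → ℝ,
      (∀ (e' : E.carrier) (uS : S.carrier), uS ∈ S.unitSpace →
        ext.i uS = E.src e' →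
        F (ext.j e') = ∫ g, f (E.mul e' (ext.i g)) ∂(μS.meas uS)) →
      ∀ u ∈ E.unitSpace, ∫ e, f e ∂(ν.meas u) = ∫ x, F x ∂(μG.meas (ext.j u))

/-! ## Twisted systems and twists -/

/-- A twisted groupoid dynamical system `(𝒜, G, E, α)`, recorded through the central
extension `G⁽⁰⁾ → S → E' → G → G⁽⁰⁾` (with `S` an abelian group bundle), the section
algebra `A = Γ₀(G⁽⁰⁾, 𝒜)`, and the associated Fell bundle `ℬ = (r*𝒜)/S` over `G`
(whose unit C*-algebra is identified with `A`).  Following the paper, the full and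
reduced twisted crossed products `C*(G, E, 𝒜)` and `C_r*(G, E, 𝒜)` are, by definition,
`C*(G, ℬ)` and `C_r*(G, ℬ)`. -/
structure TwistedDynSys (G : LCGroupoid) (μ : HaarSystem G) : Type 1 where
  S : LCGroupoid
  E' : LCGroupoid
  ext : GrpdExtension S E' G
  group_bundle : ∀ s : S.carrier, S.src s = S.rng s
  abelian : ∀ s t : S.carrier, S.rng s = S.rng t → S.mul s t = S.mul t s
  central : ∀ (e : E'.carrier) (s : S.carrier), E'.src e = E'.rng e →
    E'.src e = E'.rng (ext.i s) → E'.mul e (ext.i s) = E'.mul (ext.i s) e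
  A : CStarAlg                           -- `A = Γ₀(G⁽⁰⁾, 𝒜)`
  bundle : FellBundle G μ                -- `ℬ = (r*𝒜)/S`
  unitIso : bundle.unitAlg.carrier ≃⋆ₐ[ℂ] A.carrier

/-- The full twisted crossed product `C*(G, E, 𝒜)`. -/
def TwistedDynSys.fullCrossed {G : LCGroupoid} {μ : HaarSystem G}
    (T : TwistedDynSys G μ) : CStarAlg := T.bundle.full

/-- The reduced twisted crossed product `C_r*(G, E, 𝒜)`. -/
def TwistedDynSys.redCrossed {G : LCGroupoid} {μ : HaarSystem G}
    (T : TwistedDynSys G μ) : CStarAlg := T.bundle.reduced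

/-- A twist `Σ` over `G`: the twisted dynamical system associated to the trivial
bundle `ℂ × G⁽⁰⁾`, where the kernel `S` of the central extension is the trivial
circle bundle `G⁽⁰⁾ × 𝕋`.  Its C*-algebras are `C*(G, Σ)` and `C_r*(G, Σ)`. -/
structure TwistOver (G : LCGroupoid) (μ : HaarSystem G) : Type 1 where
  T : TwistedDynSys G μ
  circleParam : {u : G.carrier // u ∈ G.unitSpace} × Circle → T.S.carrier
  circleParam_bijective : Function.Bijective circleParam
  circleParam_continuous : Continuous circleParam
  circleParam_mul : ∀ (u : {u : G.carrier // u ∈ G.unitSpace}) (z w : Circle),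
    circleParam (u, z * w) = T.S.mul (circleParam (u, z)) (circleParam (u, w))
  trivIso : T.A.carrier ≃⋆ₐ[ℂ] C₀({u : G.carrier // u ∈ G.unitSpace}, ℂ)

/-! ## Orbit space -/

/-- The orbit equivalence relation on the unit space. -/
def orbitSetoid (G : LCGroupoid) : Setoid {u : G.carrier // u ∈ G.unitSpace} where
  r u v := ∃ x : G.carrier, G.src x = u.1 ∧ G.rng x = v.1
  iseqv := by
    constructor
    · rintro ⟨u, hu⟩
      refine ⟨u, ?_, hu⟩
      have : G.src u = G.src (G.rng u) := by rw [hu]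
      rw [this, G.src_rng, hu]
    · rintro ⟨u, hu⟩ ⟨v, hv⟩ ⟨x, hx1, hx2⟩
      exact ⟨G.inv x, by rw [G.src_inv, hx2], by rw [G.rng_inv, hx1]⟩
    · rintro ⟨u, hu⟩ ⟨v, hv⟩ ⟨w, hw⟩ ⟨x, hx1, hx2⟩ ⟨y, hy1, hy2⟩
      refine ⟨G.mul y x, ?_, ?_⟩
      · rw [G.src_comp y x (by rw [hy1, hx2]), hx1]
      · rw [G.rng_comp y x (by rw [hy1, hx2]), hy2]

/-- The orbit space `G\G⁽⁰⁾`. -/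
def OrbitSpace (G : LCGroupoid) : Type := Quotient (orbitSetoid G)

instance (G : LCGroupoid) : TopologicalSpace (OrbitSpace G) :=
  instTopologicalSpaceQuotient

/-- The orbit `[u]` of a unit. -/
def orbitOf (G : LCGroupoid) (u : {u : G.carrier // u ∈ G.unitSpace}) : OrbitSpace G :=
  Quotient.mk (orbitSetoid G) u

/-!
Let `q : X → Y` carry the inner products of `X` to those of `Y` along homomorphisms `φ` of the
left and `ψ` of the right algebras. If `φ a = 0`, then the left inner product of `q (a·x)` with
itself vanishes, so `q (a·x) = 0` and `⟨y, a·x⟩_B ∈ ker ψ` for all `x, y`. Since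
`_A⟨x, y⟩ a _A⟨x', y'⟩ = _A⟨x·⟨y, a·x'⟩_B, y'⟩`, fullness gives `A a A ⊆ X–Ind (ker ψ)`, and an
approximate unit recovers `a`. Conversely, `ψ c = 0` forces `q (x·c) = 0`, so the closed subspace
`ker φ` contains every generator `_A⟨x·c, y⟩` of `X–Ind (ker ψ)`.
-/

section ApproximateUnit

lemma map_mem_of_dense_span {R E F : Type*} [Semiring R] [AddCommMonoid E] [TopologicalSpace E]
    [Module R E] [AddCommMonoid F] [TopologicalSpace F] [Module R F] {S : Set E}
    (hS : Dense (Submodule.span R S : Set E)) {K : Submodule R F} (hK : IsClosed (K : Set F))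
    (f : E →L[R] F) (h : ∀ s ∈ S, f s ∈ K) (x : E) : f x ∈ K :=
  have span_le : Submodule.span R S ≤ K.comap f.toLinearMap := Submodule.span_le.2 h
  closure_minimal span_le (hK.preimage f.continuous) (hS x)

lemma mul_mul_mem_of_dense_span {R A : Type*} [Semiring R] [NonUnitalSemiring A]
    [TopologicalSpace A] [SeparatelyContinuousMul A] [Module R A] [IsScalarTower R A A]
    [SMulCommClass R A A] {S T : Set A} (hS : Dense (Submodule.span R S : Set A))
    (hT : Dense (Submodule.span R T : Set A)) {K : Submodule R A} (hK : IsClosed (K : Set A))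
    {a : A} (h : ∀ s ∈ S, ∀ t ∈ T, s * a * t ∈ K) (b c : A) : b * a * c ∈ K := by
  have left_mem (s : A) (hs : s ∈ S) : s * (a * c) ∈ K := by
    rw [← mul_assoc]
    exact map_mem_of_dense_span hT hK ⟨LinearMap.mulLeft R (s * a), continuous_const_mul _⟩
      (h s hs) c
  rw [mul_assoc]
  exact map_mem_of_dense_span hS hK ⟨LinearMap.mulRight R (a * c), continuous_mul_const _⟩
    left_mem b

lemma mem_of_forall_mul_mul_mem {α : Type*} [TopologicalSpace α] [Mul α] {l : Filter α}
    (hl : l.IsApproximateUnit) {K : Set α} (hK : IsClosed K) {a : α}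
    (h : ∀ b c, b * a * c ∈ K) : a ∈ K :=
  have := hl.neBot
  have mul_mem (b : α) : b * a ∈ K :=
    hK.mem_of_tendsto (hl.tendsto_mul_left (b * a)) (.of_forall (h b))
  hK.mem_of_tendsto (hl.tendsto_mul_right a) (.of_forall mul_mem)

lemma exists_isApproximateUnit (A : Type*) [NonUnitalCStarAlgebra A] :
    ∃ l : Filter A, l.IsApproximateUnit := by
  let _ := CStarAlgebra.spectralOrder A
  have := CStarAlgebra.spectralOrderedRing A
  exact ⟨_, (CStarAlgebra.increasingApproximateUnit A).toIsApproximateUnit⟩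

end ApproximateUnit

namespace ImprimBimod

section Bimodule

variable {A B : CStarAlg} (M : ImprimBimod A B)

lemma linner_zero_left (y : M.X) : M.linner 0 y = 0 := by
  simpa only [add_zero, left_eq_add] using M.linner_add_left 0 0 y

lemma rinner_zero_right (x : M.X) : M.rinner x 0 = 0 := by
  simpa only [add_zero, left_eq_add] using M.rinner_add_right x 0 0

lemma zero_lsmul (x : M.X) : M.lsmul 0 x = 0 := by
  simpa only [add_zero, left_eq_add] using M.add_lsmul 0 0 x

lemma rinner_self_eq_zero {x : M.X} : M.rinner x x = 0 ↔ x = 0 := by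
  rw [← norm_eq_zero, ← M.norm_rinner, sq_eq_zero_iff, norm_eq_zero]

lemma linner_self_eq_zero {x : M.X} : M.linner x x = 0 ↔ x = 0 := by
  refine ⟨fun h => M.rinner_self_eq_zero.1 ?_, fun h => by rw [h, M.linner_zero_left]⟩
  rw [← CStarRing.star_mul_self_eq_zero_iff]
  calc star (M.rinner x x) * M.rinner x x
      = M.rinner x (M.rsmul x (M.rinner x x)) := by rw [M.rinner_star, M.rinner_rsmul]
    _ = M.rinner x (M.lsmul (M.linner x x) x) := by rw [M.imprimitivity]
    _ = 0 := by rw [h, M.zero_lsmul, M.rinner_zero_right]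

lemma linner_mul_mul_linner (a : A.carrier) (x y x' y' : M.X) :
    M.linner x y * a * M.linner x' y' = M.linner (M.rsmul x (M.rinner y (M.lsmul a x'))) y' := by
  rw [← M.imprimitivity, M.linner_lsmul, M.linner_lsmul, mul_assoc]

lemma mem_rieffelIdeal_iff {J : Set B.carrier} {a : A.carrier} :
    a ∈ RieffelIdeal M J ↔ ∀ K : Submodule ℂ A.carrier, IsClosed (K : Set A.carrier) →
      (∀ x y, ∀ c ∈ J, M.linner (M.rsmul x c) y ∈ K) → a ∈ K := by
  refine ⟨fun ha K hK hgen => closure_minimal (Submodule.span_le.2 ?_) hK ha, fun h => ?_⟩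
  · rintro _ ⟨x, y, c, hc, rfl⟩
    exact hgen x y c hc
  · exact h _ (Submodule.isClosed_topologicalClosure _) fun x y c hc =>
      Submodule.le_topologicalClosure _ (Submodule.subset_span ⟨x, y, c, hc, rfl⟩)

lemma mem_rieffelIdeal_of_forall_rinner_lsmul_mem {J : Set B.carrier} {a : A.carrier}
    (h : ∀ x y, M.rinner x (M.lsmul a y) ∈ J) : a ∈ RieffelIdeal M J := by
  refine M.mem_rieffelIdeal_iff.2 fun K hK hgen => ?_
  obtain ⟨l, hl⟩ := exists_isApproximateUnit A.carrier
  refine mem_of_forall_mul_mul_mem hl hK (mul_mul_mem_of_dense_span M.left_full M.left_full hK ?_)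
  rintro _ ⟨x, y, rfl⟩ _ ⟨x', y', rfl⟩
  rw [M.linner_mul_mul_linner]
  exact hgen x y' _ (h y x')

end Bimodule

section InnerProductPreserving

variable {A B C D : CStarAlg} {X : ImprimBimod A B} {Y : ImprimBimod C D} {q : X.X → Y.X}

lemma map_lsmul_eq_zero {φ : A.carrier →⋆ₙₐ[ℂ] C.carrier}
    (hq : ∀ x y, φ (X.linner x y) = Y.linner (q x) (q y)) {a : A.carrier} (ha : φ a = 0)
    (x : X.X) : q (X.lsmul a x) = 0 := by
  rw [← Y.linner_self_eq_zero, ← hq, X.linner_lsmul, map_mul, ha, zero_mul]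

lemma map_rsmul_eq_zero {ψ : B.carrier →⋆ₙₐ[ℂ] D.carrier}
    (hq : ∀ x y, ψ (X.rinner x y) = Y.rinner (q x) (q y)) {b : B.carrier} (hb : ψ b = 0)
    (x : X.X) : q (X.rsmul x b) = 0 := by
  rw [← Y.rinner_self_eq_zero, ← hq, X.rinner_rsmul, map_mul, hb, mul_zero]

end InnerProductPreserving

end ImprimBimod

open scoped CStarAlgebra in
theorem stmt_19_general {A B C D : CStarAlg} (φ : A.carrier →⋆ₙₐ[ℂ] C.carrier)
    (ψ : B.carrier →⋆ₙₐ[ℂ] D.carrier) (X : ImprimBimod A B) (Y : ImprimBimod C D) (q : X.X → Y.X)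
    (hq_linner : ∀ x y, φ (X.linner x y) = Y.linner (q x) (q y))
    (hq_rinner : ∀ x y, ψ (X.rinner x y) = Y.rinner (q x) (q y)) :
    RieffelIdeal X {b | ψ b = 0} = {a | φ a = 0} := by
  ext a
  constructor
  · intro ha
    have isClosed_ker : IsClosed {a | φ a = 0} :=
      isClosed_singleton.preimage (map_continuous φ)
    refine X.mem_rieffelIdeal_iff.1 ha (LinearMap.ker (φ : A.carrier →ₗ[ℂ] C.carrier))
      isClosed_ker fun x y c hc => LinearMap.mem_ker.2 ?_
    rw [LinearMap.coe_coe, hq_linner,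
      ImprimBimod.map_rsmul_eq_zero hq_rinner hc, Y.linner_zero_left]
  · intro ha
    refine X.mem_rieffelIdeal_of_forall_rinner_lsmul_mem fun x y => ?_
    rw [Set.mem_ofPred_eq, hq_rinner,
      ImprimBimod.map_lsmul_eq_zero hq_linner ha, Y.rinner_zero_right]

/-- Let `A` and `B` be C*-algebras with ideals `I ⊆ A` and `J ⊆ B`,
let `X` be an `A`–`B`-imprimitivity bimodule and `Y` an `(A/I)`–`(B/J)`-imprimitivity
bimodule, and suppose there is a surjective linear map `q : X → Y` satisfying
`q(a·x) = p^A(a)·q(x)`, `q(x·b) = q(x)·p^B(b)`, `p^A(⟨x,y⟩_A) = ⟨q(x),q(y)⟩_{A/I}`,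
and `p^B(⟨x,y⟩_B) = ⟨q(x),q(y)⟩_{B/J}` for all `x, y ∈ X`, `a ∈ A`, `b ∈ B`, where
`p^A : A → A/I` and `p^B : B → B/J` are the quotient maps.  Then `I` and `J` are
paired under the Rieffel correspondence associated to `X`, i.e. `I = X–Ind J`. -/
theorem stmt_19 (A B : CStarAlg) (I : Set A.carrier) (J : Set B.carrier)
    (hI : IsCStarIdeal A I) (hJ : IsCStarIdeal B J)
    (Aq Bq : CStarAlg)
    (pA : A.carrier →⋆ₙₐ[ℂ] Aq.carrier) (pB : B.carrier →⋆ₙₐ[ℂ] Bq.carrier)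
    (hpA_surj : Function.Surjective pA) (hpA_ker : {a : A.carrier | pA a = 0} = I)
    (hpB_surj : Function.Surjective pB) (hpB_ker : {b : B.carrier | pB b = 0} = J)
    (X : ImprimBimod A B) (Y : ImprimBimod Aq Bq)
    (q : X.X →ₗ[ℂ] Y.X) (hq_surj : Function.Surjective q)
    (hq_l : ∀ a x, q (X.lsmul a x) = Y.lsmul (pA a) (q x))
    (hq_r : ∀ x b, q (X.rsmul x b) = Y.rsmul (q x) (pB b))
    (hq_linner : ∀ x y, pA (X.linner x y) = Y.linner (q x) (q y))
    (hq_rinner : ∀ x y, pB (X.rinner x y) = Y.rinner (q x) (q y)) :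
    RieffelIdeal X J = I := by
  subst hpA_ker hpB_ker
  exact stmt_19_general pA pB X Y q hq_linner hq_rinner

end FellPaper
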